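/- (Theorem 3, equations (38)–(39), transmit axis) Let ε_τ ∈ ℝ be the current estimate of the K-th source's transmit phase and suppose ε_{τ+1} ∈ ℝ satisfies exp(j·ε_{τ+1}) = (u_1^† R u_1)/(u_1^† R u_3) (in particular u_1^† R u_3 ≠ 0). Define Q_tx(φ) = (u_1 − exp(j·φ)·u_3)^† R (u_1 − exp(j·φ)·u_3). Then Q_tx(ε_{τ+1}) = 0, and consequently Q_tx(ε_τ) − Q_tx(ε_{τ+1}) = 4^{2K−1} · Σ_{k=1}^{K} σ_k² · sin²((ε_tx,k − ε_τ)/2) · ∏_{m=1}^{K−1} sin²((ε_tx,k − ε̂_tx,m)/2) · ∏_{n=1}^{K−1} sin²((ε_rx,k − ε̂_rx,n)/2) ≥ 4^{2K−1} · σ_K² · sin²((ε_tx,K − ε_τ)/2) · ∏_{m=1}^{K−1} sin²((ε_tx,K − ε̂_tx,m)/2) · ∏_{n=1}^{K−1} sin²((ε_rx,K − ε̂_rx,n)/2) ≥ 0; in particular the cost never increases under the update, and it strictly decreases whenever ε_tx,K − ε_τ is not an integer multiple of 2π and none of ε_tx,K − ε̂_tx,m and ε_rx,K − ε̂_rx,n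 is an integer multiple of 2π. -/

import Mathlib

open scoped BigOperators

/-- Steering vector `a(ε) ∈ ℂ^{n+1}` with entries `exp(j·i·ε)`, `i = 0,…,n`. -/
noncomputable def steer (n : ℕ) (ε : ℝ) : Fin (n + 1) → ℂ :=
  fun i => Complex.exp (Complex.I * ((i : ℕ) : ℂ) * (ε : ℂ))

/-- The vector `E(η_1,…,η_m) ∈ ℂ^{m+1}` defined recursively by
`E(η_1) = (1, −exp(j·η_1))` and
`E(η_1,…,η_p) = (E(η_1,…,η_{p−1}), 0) − exp(j·η_p)·(0, E(η_1,…,η_{p−1}))`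
(with base case `E() = (1)`, which reproduces the stated base case at `m = 1`). -/
noncomputable def Evec : (m : ℕ) → (Fin m → ℝ) → (Fin (m + 1) → ℂ)
  | 0, _ => fun _ => 1
  | m + 1, η => fun i =>
      Fin.snoc (α := fun _ => ℂ) (Evec m fun j => η j.castSucc) 0 i -
        Complex.exp (Complex.I * (η (Fin.last m) : ℂ)) *
          Fin.cons (α := fun _ => ℂ) 0 (Evec m fun j => η j.castSucc) i

/-- The cyclic down-shift matrix on `ℂ^{n+1}`: `(Lv)_0 = v_n`, `(Lv)_i = v_{i−1}` for `i ≥ 1`. -/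
def Lmat (n : ℕ) : Matrix (Fin (n + 1)) (Fin (n + 1)) ℂ :=
  Matrix.of fun i l => if l = i - 1 then 1 else 0

/-- Kronecker product of vectors: `(v ⊗ w)_{(i,l)} = v_i · w_l`. -/
def kron {a b : Type*} (v : a → ℂ) (w : b → ℂ) : a × b → ℂ :=
  fun p => v p.1 * w p.2

/-- `x^† y = Σ_i conj(x_i) · y_i`. -/
noncomputable def ip {n : Type*} [Fintype n] (x y : n → ℂ) : ℂ :=
  ∑ i, (starRingEnd ℂ) (x i) * y i

/-- `x^† M y = Σ_{i,l} conj(x_i) · M_{i,l} · y_l`. -/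
noncomputable def qf {n : Type*} [Fintype n] (x : n → ℂ) (M : Matrix n n ℂ) (y : n → ℂ) : ℂ :=
  ∑ i, ∑ l, (starRingEnd ℂ) (x i) * M i l * y l

/-- `E(η_1,…,η_Kp) ∈ ℂ^{Kp+1}` padded with a trailing zero, giving a vector in `ℂ^{Kp+2}`. -/
noncomputable def Epad (Kp : ℕ) (η : Fin Kp → ℝ) : Fin (Kp + 2) → ℂ :=
  Fin.snoc (Evec Kp η) 0

/-- `u_0 = Ẽ_tx ⊗ Ẽ_rx`. -/
noncomputable def u0 (Kp : ℕ) (ηt ηr : Fin Kp → ℝ) : Fin (Kp + 2) × Fin (Kp + 2) → ℂ :=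
  kron (Epad Kp ηt) (Epad Kp ηr)

/-- `u_1 = Ẽ_tx ⊗ (L·Ẽ_rx)`. -/
noncomputable def u1 (Kp : ℕ) (ηt ηr : Fin Kp → ℝ) : Fin (Kp + 2) × Fin (Kp + 2) → ℂ :=
  kron (Epad Kp ηt) ((Lmat (Kp + 1)).mulVec (Epad Kp ηr))

/-- `u_2 = (L·Ẽ_tx) ⊗ Ẽ_rx`. -/
noncomputable def u2 (Kp : ℕ) (ηt ηr : Fin Kp → ℝ) : Fin (Kp + 2) × Fin (Kp + 2) → ℂ :=
  kron ((Lmat (Kp + 1)).mulVec (Epad Kp ηt)) (Epad Kp ηr)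

/-- `u_3 = (L·Ẽ_tx) ⊗ (L·Ẽ_rx)`. -/
noncomputable def u3 (Kp : ℕ) (ηt ηr : Fin Kp → ℝ) : Fin (Kp + 2) × Fin (Kp + 2) → ℂ :=
  kron ((Lmat (Kp + 1)).mulVec (Epad Kp ηt)) ((Lmat (Kp + 1)).mulVec (Epad Kp ηr))

/-- The noiseless auto-correlation matrix `R = Σ_{k=1}^K σ_k² A_k A_k^†`, where
`A_k = a(ε_tx,k) ⊗ a(ε_rx,k)` and `σsq k` is the power `σ_k²`. -/
noncomputable def Rmat (K : ℕ) (εtx εrx σsq : Fin K → ℝ) :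
    Matrix (Fin (K + 1) × Fin (K + 1)) (Fin (K + 1) × Fin (K + 1)) ℂ :=
  Matrix.of fun p q => ∑ k, (σsq k : ℂ) *
    kron (steer K (εtx k)) (steer K (εrx k)) p *
    (starRingEnd ℂ) (kron (steer K (εtx k)) (steer K (εrx k)) q)

/-- The rank-one matrix `R_ε = a(ε) a(ε)^† ∈ ℂ^{(Kp+2)×(Kp+2)}`. -/
noncomputable def Rsingle (Kp : ℕ) (ε : ℝ) : Matrix (Fin (Kp + 2)) (Fin (Kp + 2)) ℂ :=
  Matrix.of fun i l => steer (Kp + 1) ε i * (starRingEnd ℂ) (steer (Kp + 1) ε l)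

/-- The iDEA cost `Q_tx(φ) = (u_1 − exp(j·φ)·u_3)^† R (u_1 − exp(j·φ)·u_3)`. -/
noncomputable def Qcost (Kp : ℕ) (εtx εrx σsq : Fin (Kp + 1) → ℝ)
    (ηt ηr : Fin Kp → ℝ) (φ : ℝ) : ℂ :=
  qf (u1 Kp ηt ηr - Complex.exp (Complex.I * (φ : ℂ)) • u3 Kp ηt ηr)
    (Rmat (Kp + 1) εtx εrx σsq)
    (u1 Kp ηt ηr - Complex.exp (Complex.I * (φ : ℂ)) • u3 Kp ηt ηr)

/-- The closed-form value `4^{2K−1} · Σ_k σ_k² sin²((ε_tx,k − φ)/2) ∏_m sin²((ε_tx,k − ε̂_tx,m)/2)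
∏_n sin²((ε_rx,k − ε̂_rx,n)/2)` (here `K = Kp + 1`, so `2K − 1 = 2·Kp + 1`). -/
noncomputable def Ssum (Kp : ℕ) (εtx εrx σsq : Fin (Kp + 1) → ℝ)
    (ηt ηr : Fin Kp → ℝ) (φ : ℝ) : ℝ :=
  (4 : ℝ) ^ (2 * Kp + 1) * ∑ k, σsq k * Real.sin ((εtx k - φ) / 2) ^ 2 *
    (∏ m, Real.sin ((εtx k - ηt m) / 2) ^ 2) *
    (∏ n, Real.sin ((εrx k - ηr n) / 2) ^ 2)

/-- The `k = K` term of `Ssum`, i.e. the lower bound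
`4^{2K−1} · σ_K² sin²((ε_tx,K − φ)/2) ∏_m sin²((ε_tx,K − ε̂_tx,m)/2) ∏_n sin²((ε_rx,K − ε̂_rx,n)/2)`. -/
noncomputable def Slb (Kp : ℕ) (εtx εrx σsq : Fin (Kp + 1) → ℝ)
    (ηt ηr : Fin Kp → ℝ) (φ : ℝ) : ℝ :=
  (4 : ℝ) ^ (2 * Kp + 1) * σsq (Fin.last Kp) *
    Real.sin ((εtx (Fin.last Kp) - φ) / 2) ^ 2 *
    (∏ m, Real.sin ((εtx (Fin.last Kp) - ηt m) / 2) ^ 2) *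
    (∏ n, Real.sin ((εrx (Fin.last Kp) - ηr n) / 2) ^ 2)


lemma ip_snoc (n : ℕ) (v : Fin (n+1) → ℂ) (ε : ℝ) :
    ip (Fin.snoc (α := fun _ => ℂ) v 0) (steer (n+1) ε) = ip v (steer n ε) := by
  unfold ip
  rw [Fin.sum_univ_castSucc]
  simp [steer]

lemma ip_cons (n : ℕ) (v : Fin (n+1) → ℂ) (ε : ℝ) :
    ip (Fin.cons (α := fun _ => ℂ) 0 v) (steer (n+1) ε)
      = Complex.exp (Complex.I * ε) * ip v (steer n ε) := by
  unfold ip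
  rw [Fin.sum_univ_succ, Finset.mul_sum]
  simp only [Fin.cons_zero, Fin.cons_succ, map_zero, zero_mul, zero_add, steer]
  refine Finset.sum_congr rfl fun i _ => ?_
  rw [mul_left_comm, ← Complex.exp_add]
  congr 2
  push_cast [Fin.val_succ]
  ring

lemma ip_sub_smul {n : Type*} [Fintype n] (x y a : n → ℂ) (c : ℂ) :
    ip (x - c • y) a = ip x a - (starRingEnd ℂ) c * ip y a := by
  unfold ip
  rw [Finset.mul_sum, ← Finset.sum_sub_distrib]
  refine Finset.sum_congr rfl fun i _ => ?_
  simp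
  ring

lemma ip_kron {a b : Type*} [Fintype a] [Fintype b] (x c : a → ℂ) (y d : b → ℂ) :
    ip (kron x y) (kron c d) = ip x c * ip y d := by
  unfold ip kron
  rw [Fintype.sum_prod_type, Finset.sum_mul_sum]
  refine Finset.sum_congr rfl fun i _ => Finset.sum_congr rfl fun j _ => ?_
  simp
  ring

lemma factor_normSq (x y : ℝ) :
    (1 - (starRingEnd ℂ) (Complex.exp (Complex.I * y)) * Complex.exp (Complex.I * x)) *
     (starRingEnd ℂ) (1 - (starRingEnd ℂ) (Complex.exp (Complex.I * y)) * Complex.exp (Complex.I * x))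
      = ((4 * Real.sin ((x - y) / 2) ^ 2 : ℝ) : ℂ) := by
  have h : (starRingEnd ℂ) (Complex.exp (Complex.I * y)) * Complex.exp (Complex.I * x)
      = Complex.exp (((x - y : ℝ) : ℂ) * Complex.I) := by
    rw [← Complex.exp_conj, ← Complex.exp_add]
    congr 1
    simp
    ring
  rw [h, Complex.mul_conj, Complex.normSq_apply]
  have h2 : x - y = 2 * ((x - y) / 2) := by ring
  simp only [Complex.sub_re, Complex.sub_im, Complex.one_re, Complex.one_im,
    Complex.exp_ofReal_mul_I_re, Complex.exp_ofReal_mul_I_im]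
  congr 1
  have h3 : Real.cos (x - y) = 1 - 2 * Real.sin ((x - y) / 2) ^ 2 := by
    rw [h2, Real.cos_two_mul, ← h2, Real.cos_sq']; ring
  have h4 := Real.sin_sq_add_cos_sq (x - y)
  nlinarith

lemma ip_Evec (m : ℕ) (η : Fin m → ℝ) (ε : ℝ) :
    ip (Evec m η) (steer m ε) * (starRingEnd ℂ) (ip (Evec m η) (steer m ε))
      = ((∏ i, (4 * Real.sin ((ε - η i) / 2) ^ 2) : ℝ) : ℂ) := by
  induction m with
  | zero => simp [ip, Evec, steer]
  | succ m ih =>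
    have h : Evec (m+1) η = Fin.snoc (α := fun _ => ℂ) (Evec m fun j => η j.castSucc) 0 -
        Complex.exp (Complex.I * (η (Fin.last m) : ℂ)) •
          Fin.cons (α := fun _ => ℂ) 0 (Evec m fun j => η j.castSucc) := by
      funext i
      simp [Evec]
    rw [h, ip_sub_smul, ip_snoc, ip_cons, Fin.prod_univ_castSucc, Complex.ofReal_mul, ← ih,
      ← factor_normSq]
    simp only [map_mul, map_sub, map_one]
    ring

lemma L_Epad (Kp : ℕ) (η : Fin Kp → ℝ) :
    (Lmat (Kp + 1)).mulVec (Epad Kp η) = Fin.cons (α := fun _ => ℂ) 0 (Evec Kp η) := by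
  funext i
  have h : (Lmat (Kp + 1)).mulVec (Epad Kp η) i = Epad Kp η (i - 1) := by
    simp [Matrix.mulVec, dotProduct, Lmat]
  rw [h]
  refine Fin.cases ?_ (fun j => ?_) i
  · have : (0 - 1 : Fin (Kp + 2)) = Fin.last (Kp + 1) := by
      rw [sub_eq_iff_eq_add]; simp
    rw [this]
    simp [Epad]
  · have : (j.succ - 1 : Fin (Kp + 2)) = j.castSucc := by
      rw [sub_eq_iff_eq_add]; simp
    rw [this]
    simp [Epad]

lemma qf_Rmat (K : ℕ) (εtx εrx σsq : Fin K → ℝ) (x y : Fin (K + 1) × Fin (K + 1) → ℂ) :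
    qf x (Rmat K εtx εrx σsq) y = ∑ k, (σsq k : ℂ) *
      (ip x (kron (steer K (εtx k)) (steer K (εrx k))) *
        (starRingEnd ℂ) (ip y (kron (steer K (εtx k)) (steer K (εrx k))))) := by
  unfold qf Rmat ip
  simp only [Matrix.of_apply, map_sum, map_mul, Complex.conj_conj, Finset.sum_mul_sum]
  simp only [Finset.mul_sum, Finset.sum_mul]
  rw [Finset.sum_comm' (t' := Finset.univ) (s' := fun _ => Finset.univ) (by simp)]
  rw [Finset.sum_comm]
  simp_rw [Finset.sum_comm (s := Finset.univ (α := Fin (K + 1) × Fin (K + 1)))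
    (t := Finset.univ (α := Fin K))]
  refine Finset.sum_congr rfl fun k _ => ?_
  refine Finset.sum_congr rfl fun i _ => Finset.sum_congr rfl fun j _ => ?_
  ring

/-- The weight of source `k`. -/
noncomputable def wgt (Kp : ℕ) (εtx εrx σsq : Fin (Kp + 1) → ℝ)
    (ηt ηr : Fin Kp → ℝ) (k : Fin (Kp + 1)) : ℝ :=
  σsq k * ((∏ i, (4 * Real.sin ((εtx k - ηt i) / 2) ^ 2)) *
    (∏ i, (4 * Real.sin ((εrx k - ηr i) / 2) ^ 2)))

lemma ip_u1 (Kp : ℕ) (ηt ηr : Fin Kp → ℝ) (x y : ℝ) :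
    ip (u1 Kp ηt ηr) (kron (steer (Kp + 1) x) (steer (Kp + 1) y)) =
      ip (Evec Kp ηt) (steer Kp x) *
        (Complex.exp (Complex.I * y) * ip (Evec Kp ηr) (steer Kp y)) := by
  rw [u1, ip_kron, L_Epad, Epad, ip_snoc, ip_cons]

lemma ip_u3 (Kp : ℕ) (ηt ηr : Fin Kp → ℝ) (x y : ℝ) :
    ip (u3 Kp ηt ηr) (kron (steer (Kp + 1) x) (steer (Kp + 1) y)) =
      Complex.exp (Complex.I * x) *
      ip (u1 Kp ηt ηr) (kron (steer (Kp + 1) x) (steer (Kp + 1) y)) := by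
  rw [ip_u1, u3, ip_kron, L_Epad, L_Epad, ip_cons, ip_cons]
  ring

lemma exp_mul_conj (y : ℝ) :
    Complex.exp (Complex.I * y) * (starRingEnd ℂ) (Complex.exp (Complex.I * y)) = 1 := by
  rw [← Complex.exp_conj, ← Complex.exp_add]
  simp

lemma wgt_eq (Kp : ℕ) (εtx εrx σsq : Fin (Kp + 1) → ℝ)
    (ηt ηr : Fin Kp → ℝ) (k : Fin (Kp + 1)) :
    (σsq k : ℂ) *
      (ip (u1 Kp ηt ηr) (kron (steer (Kp + 1) (εtx k)) (steer (Kp + 1) (εrx k))) *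
      (starRingEnd ℂ)
        (ip (u1 Kp ηt ηr) (kron (steer (Kp + 1) (εtx k)) (steer (Kp + 1) (εrx k)))))
      = (wgt Kp εtx εrx σsq ηt ηr k : ℂ) := by
  rw [ip_u1, wgt, Complex.ofReal_mul, Complex.ofReal_mul, ← ip_Evec, ← ip_Evec]
  have h := exp_mul_conj (εrx k)
  simp only [map_mul]
  linear_combination (σsq k : ℂ) * ip (Evec Kp ηt) (steer Kp (εtx k)) *
    (starRingEnd ℂ) (ip (Evec Kp ηt) (steer Kp (εtx k))) *
    ip (Evec Kp ηr) (steer Kp (εrx k)) *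
    (starRingEnd ℂ) (ip (Evec Kp ηr) (steer Kp (εrx k))) * h

lemma Qcost_eq (Kp : ℕ) (εtx εrx σsq : Fin (Kp + 1) → ℝ) (ηt ηr : Fin Kp → ℝ) (φ : ℝ) :
    Qcost Kp εtx εrx σsq ηt ηr φ = ∑ k, (wgt Kp εtx εrx σsq ηt ηr k : ℂ) *
      ((1 - (starRingEnd ℂ) (Complex.exp (Complex.I * φ)) * Complex.exp (Complex.I * εtx k)) *
       (starRingEnd ℂ) (1 - (starRingEnd ℂ) (Complex.exp (Complex.I * φ)) *
        Complex.exp (Complex.I * εtx k))) := by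
  rw [Qcost, qf_Rmat]
  refine Finset.sum_congr rfl fun k _ => ?_
  rw [ip_sub_smul, ip_u3, ← wgt_eq]
  simp only [map_mul, map_sub, map_one]
  ring

lemma Qcost_Ssum (Kp : ℕ) (εtx εrx σsq : Fin (Kp + 1) → ℝ) (ηt ηr : Fin Kp → ℝ) (φ : ℝ) :
    Qcost Kp εtx εrx σsq ηt ηr φ = ((Ssum Kp εtx εrx σsq ηt ηr φ : ℝ) : ℂ) := by
  rw [Qcost_eq, Ssum, Finset.mul_sum, Complex.ofReal_sum]
  refine Finset.sum_congr rfl fun k _ => ?_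
  rw [factor_normSq, ← Complex.ofReal_mul, wgt, Finset.prod_mul_distrib,
    Finset.prod_mul_distrib]
  congr 1
  simp only [Finset.prod_const, Finset.card_univ, Fintype.card_fin]
  ring

lemma Qcost_zero (Kp : ℕ) (εtx εrx σsq : Fin (Kp + 1) → ℝ) (ηt ηr : Fin Kp → ℝ) (φ : ℝ)
    (hup : Complex.exp (Complex.I * (φ : ℂ)) =
      qf (u1 Kp ηt ηr) (Rmat (Kp + 1) εtx εrx σsq) (u1 Kp ηt ηr) /
        qf (u1 Kp ηt ηr) (Rmat (Kp + 1) εtx εrx σsq) (u3 Kp ηt ηr)) :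
    Qcost Kp εtx εrx σsq ηt ηr φ = 0 := by
  have hS : qf (u1 Kp ηt ηr) (Rmat (Kp + 1) εtx εrx σsq) (u1 Kp ηt ηr) =
      ∑ k, (wgt Kp εtx εrx σsq ηt ηr k : ℂ) := by
    rw [qf_Rmat]
    exact Finset.sum_congr rfl fun k _ => wgt_eq _ _ _ _ _ _ _
  have hT : qf (u1 Kp ηt ηr) (Rmat (Kp + 1) εtx εrx σsq) (u3 Kp ηt ηr) =
      ∑ k, (wgt Kp εtx εrx σsq ηt ηr k : ℂ) *
        (starRingEnd ℂ) (Complex.exp (Complex.I * εtx k)) := by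
    rw [qf_Rmat]
    refine Finset.sum_congr rfl fun k _ => ?_
    rw [ip_u3, ← wgt_eq, map_mul]
    ring
  rw [hS, hT] at hup
  have hT0 : (∑ k, (wgt Kp εtx εrx σsq ηt ηr k : ℂ) *
        (starRingEnd ℂ) (Complex.exp (Complex.I * εtx k))) ≠ 0 := by
    intro h0
    rw [h0, div_zero] at hup
    exact Complex.exp_ne_zero _ hup
  rw [eq_div_iff hT0] at hup
  have hup2 := congrArg (starRingEnd ℂ) hup
  simp only [map_mul, map_sum, Complex.conj_conj, Complex.conj_ofReal] at hup2
  have key : Qcost Kp εtx εrx σsq ηt ηr φ =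
      2 * ∑ k, (wgt Kp εtx εrx σsq ηt ηr k : ℂ)
      - Complex.exp (Complex.I * φ) * (∑ k, (wgt Kp εtx εrx σsq ηt ηr k : ℂ) *
        (starRingEnd ℂ) (Complex.exp (Complex.I * εtx k)))
      - (starRingEnd ℂ) (Complex.exp (Complex.I * φ)) *
        (∑ k, (wgt Kp εtx εrx σsq ηt ηr k : ℂ) * Complex.exp (Complex.I * εtx k)) := by
    rw [Qcost_eq, Finset.mul_sum, Finset.mul_sum, Finset.mul_sum, ← Finset.sum_sub_distrib,
      ← Finset.sum_sub_distrib]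
    refine Finset.sum_congr rfl fun k _ => ?_
    have h1 := exp_mul_conj (εtx k)
    have h2 := exp_mul_conj φ
    simp only [map_mul, map_sub, map_one, Complex.conj_conj]
    linear_combination (wgt Kp εtx εrx σsq ηt ηr k : ℂ) *
      (Complex.exp (Complex.I * φ) * (starRingEnd ℂ) (Complex.exp (Complex.I * φ)) * h1 + h2)
  rw [key, hup, hup2]
  ring

lemma sin_half_ne (x : ℝ) (h : ¬ ∃ n : ℤ, x = n * (2 * Real.pi)) : Real.sin (x / 2) ≠ 0 := by
  intro h0
  obtain ⟨n, hn⟩ := Real.sin_eq_zero_iff.mp h0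
  exact h ⟨n, by linarith⟩

lemma Slb_le (Kp : ℕ) (εtx εrx σsq : Fin (Kp + 1) → ℝ) (hσ : ∀ k, 0 < σsq k)
    (ηt ηr : Fin Kp → ℝ) (ετ : ℝ) :
    Slb Kp εtx εrx σsq ηt ηr ετ ≤ Ssum Kp εtx εrx σsq ηt ηr ετ := by
  have h := Finset.single_le_sum (f := fun k => σsq k * Real.sin ((εtx k - ετ) / 2) ^ 2 *
    (∏ m, Real.sin ((εtx k - ηt m) / 2) ^ 2) * (∏ n, Real.sin ((εrx k - ηr n) / 2) ^ 2))
    (s := Finset.univ) (fun k _ => by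
      have := hσ k
      positivity) (Finset.mem_univ (Fin.last Kp))
  have h' := mul_le_mul_of_nonneg_left h (by positivity : (0 : ℝ) ≤ 4 ^ (2 * Kp + 1))
  unfold Slb Ssum
  refine le_trans (le_of_eq ?_) h'
  simp only [mul_assoc]

lemma Slb_nonneg (Kp : ℕ) (εtx εrx σsq : Fin (Kp + 1) → ℝ) (hσ : ∀ k, 0 < σsq k)
    (ηt ηr : Fin Kp → ℝ) (ετ : ℝ) :
    0 ≤ Slb Kp εtx εrx σsq ηt ηr ετ := by
  have hK := hσ (Fin.last Kp)
  unfold Slb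
  positivity

lemma Slb_pos (Kp : ℕ) (εtx εrx σsq : Fin (Kp + 1) → ℝ) (hσ : ∀ k, 0 < σsq k)
    (ηt ηr : Fin Kp → ℝ) (ετ : ℝ)
    (h1 : ¬ ∃ n : ℤ, εtx (Fin.last Kp) - ετ = n * (2 * Real.pi))
    (h2 : ∀ m : Fin Kp, ¬ ∃ n : ℤ, εtx (Fin.last Kp) - ηt m = n * (2 * Real.pi))
    (h3 : ∀ m : Fin Kp, ¬ ∃ n : ℤ, εrx (Fin.last Kp) - ηr m = n * (2 * Real.pi)) :
    0 < Slb Kp εtx εrx σsq ηt ηr ετ := by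
  have hK := hσ (Fin.last Kp)
  have g1 := sin_half_ne _ h1
  have g2 : 0 < ∏ m, Real.sin ((εtx (Fin.last Kp) - ηt m) / 2) ^ 2 :=
    Finset.prod_pos fun m _ => sq_pos_iff.mpr (sin_half_ne _ (h2 m))
  have g3 : 0 < ∏ m, Real.sin ((εrx (Fin.last Kp) - ηr m) / 2) ^ 2 :=
    Finset.prod_pos fun m _ => sq_pos_iff.mpr (sin_half_ne _ (h3 m))
  unfold Slb
  exact mul_pos (mul_pos (mul_pos (mul_pos (pow_pos (by norm_num) _) hK) (sq_pos_iff.mpr g1)) g2) g3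

/-- Theorem 3, eqs. (38)–(39), transmit axis: if
exp(j·ε_{τ+1}) = (u_1^† R u_1)/(u_1^† R u_3), then Q_tx(ε_{τ+1}) = 0,
Q_tx(ε_τ) − Q_tx(ε_{τ+1}) equals the closed-form sum, which is bounded below by its
K-th term, which is nonnegative; and the decrease is strict whenever ε_tx,K − ε_τ is not an
integer multiple of 2π and none of ε_tx,K − ε̂_tx,m and ε_rx,K − ε̂_rx,n is. -/
theorem statement19 (Kp : ℕ) (hKp : 1 ≤ Kp) (εtx εrx : Fin (Kp + 1) → ℝ)
    (σsq : Fin (Kp + 1) → ℝ) (hσ : ∀ k, 0 < σsq k) (ηt ηr : Fin Kp → ℝ) (ετ ετ1 : ℝ)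
    (hup : Complex.exp (Complex.I * (ετ1 : ℂ)) =
      qf (u1 Kp ηt ηr) (Rmat (Kp + 1) εtx εrx σsq) (u1 Kp ηt ηr) /
        qf (u1 Kp ηt ηr) (Rmat (Kp + 1) εtx εrx σsq) (u3 Kp ηt ηr)) :
    Qcost Kp εtx εrx σsq ηt ηr ετ1 = 0 ∧
    Qcost Kp εtx εrx σsq ηt ηr ετ - Qcost Kp εtx εrx σsq ηt ηr ετ1 =
      ((Ssum Kp εtx εrx σsq ηt ηr ετ : ℝ) : ℂ) ∧
    Slb Kp εtx εrx σsq ηt ηr ετ ≤ Ssum Kp εtx εrx σsq ηt ηr ετ ∧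
    0 ≤ Slb Kp εtx εrx σsq ηt ηr ετ ∧
    (((¬ ∃ n : ℤ, εtx (Fin.last Kp) - ετ = n * (2 * Real.pi)) ∧
      (∀ m : Fin Kp, ¬ ∃ n : ℤ, εtx (Fin.last Kp) - ηt m = n * (2 * Real.pi)) ∧
      (∀ m : Fin Kp, ¬ ∃ n : ℤ, εrx (Fin.last Kp) - ηr m = n * (2 * Real.pi))) →
      0 < Ssum Kp εtx εrx σsq ηt ηr ετ) := by
  have h0 := Qcost_zero Kp εtx εrx σsq ηt ηr ετ1 hup
  have hle := Slb_le Kp εtx εrx σsq hσ ηt ηr ετ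
  refine ⟨h0, by rw [h0, sub_zero, Qcost_Ssum], hle, Slb_nonneg Kp εtx εrx σsq hσ ηt ηr ετ, ?_⟩
  rintro ⟨h1, h2, h3⟩
  refine lt_of_lt_of_le ?_ hle
  exact Slb_pos Kp εtx εrx σsq hσ ηt ηr ετ h1 h2 h3
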